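/- Let G be a finite group acting transitively on a finite set Ω with point stabilizer H ≤ G (i.e., the action is equivalent to the action on the cosets of H). Let p be a prime, and suppose there exists an elementary abelian subgroup K of G of order p² satisfying: (1) K = ⟨g, h⟩ for some elements g, h ∈ G of order p of maximal fixity; (2) ⟨g⟩, ⟨h⟩ and ⟨gh⁻¹⟩ are pairwise conjugate subgroups of G; (3) K ∩ H = ⟨g⟩. Then the action of G on Ω is not binary. -/

import Mathlib

/-!
Let `Λ = Fix(g) ∪ Fix(h) ∪ Fix(gh⁻¹)` and let `τ : Λ → Ω` be the identity on `Fix(g) ∪ Fix(h)` and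
agree with `g` (equivalently, with `h`) on `Fix(gh⁻¹)`. On the union of any two of these three sets
`τ` is induced by one of `1`, `g`, `h`, so an enumeration of `Λ` and its image under `τ` are
2-related. If the action were binary, some `f ∈ G` would induce `τ` on all of `Λ`.

Since `ω₀` is fixed by `g` but not by `h`, and `Fix(gh⁻¹)` has at least as many points as `Fix(g)` by
conjugacy, `g` moves a point of `Fix(gh⁻¹)`. There `f` acts as `g`, so `p` divides the order of `f`,
and a power of `f` has order `p` and fixes `Fix(g) ∪ Fix(h)` pointwise. Maximal fixity of `h`
forces `Fix(g) ⊆ Fix(h)`, contradicting the choice of `ω₀`.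
-/

/-- An action of `G` on `Ω` is *binary* if for every `n` and every pair of tuples
`I, J ∈ Ωⁿ`, whenever `I` and `J` are 2-related, there is a single element of `G`
mapping `I` to `J` entrywise. -/
def IsBinary (G Ω : Type*) [Group G] [MulAction G Ω] : Prop :=
  ∀ (n : ℕ) (I J : Fin n → Ω),
    (∀ i j : Fin n, ∃ g : G, g • I i = J i ∧ g • I j = J j) →
    ∃ g : G, ∀ i, g • I i = J i

/-- Two subgroups of `G` are conjugate when one is the image of the other under
conjugation by some element of `G`. -/
def SubgroupsConj {G : Type*} [Group G] (A B : Subgroup G) : Prop :=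
  ∃ k : G, Subgroup.map (MulAut.conj k).toMonoidHom A = B

/-- Only this inequality between the numbers of fixed points is needed; it holds because `b` is
conjugate to a power of `a`. -/
lemma card_fixedBy_le_of_subgroupsConj {G Ω : Type*} [Group G] [Finite Ω] [MulAction G Ω]
    {a b : G} (hab : SubgroupsConj (Subgroup.zpowers a) (Subgroup.zpowers b)) :
    Nat.card (MulAction.fixedBy Ω a) ≤ Nat.card (MulAction.fixedBy Ω b) := by
  obtain ⟨k, hk⟩ := hab
  have hb : b ∈ Subgroup.map (MulAut.conj k).toMonoidHom (Subgroup.zpowers a) := by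
    rw [hk]; exact Subgroup.mem_zpowers b
  obtain ⟨c, hc, hcb⟩ := hb
  have hcb' : k * c * k⁻¹ = b := by simpa using hcb
  have hfix : ∀ x : Ω, a • x = x → b • k • x = k • x := by
    intro x hx
    have hcx : c ∈ MulAction.stabilizer G x :=
      (Subgroup.zpowers_le.2 (show a ∈ MulAction.stabilizer G x from hx)) hc
    rw [← hcb', ← mul_smul, inv_mul_cancel_right, mul_smul, show c • x = x from hcx]
  refine Nat.card_le_card_of_injective
    (fun x : MulAction.fixedBy Ω a => (⟨k • x.1, hfix x.1 x.2⟩ : MulAction.fixedBy Ω b)) ?_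
  intro x y hxy
  exact Subtype.ext (MulAction.injective k (congrArg Subtype.val hxy))

/-- In a binary action there is an element of `G` which acts trivially on `Fix(g) ∪ Fix(h)` and as
`g` on the points where `g` and `h` agree. -/
lemma IsBinary.exists_smul_eq {G Ω : Type*} [Group G] [Finite Ω] [MulAction G Ω]
    (hbin : IsBinary G Ω) (g h : G) :
    ∃ f : G, (∀ x : Ω, g • x = x → f • x = x) ∧ (∀ x : Ω, h • x = x → f • x = x) ∧
      ∀ x : Ω, g • x = h • x → f • x = g • x := by
  classical
  let L := {x : Ω // g • x = x ∨ h • x = x ∨ g • x = h • x}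
  let e := Finite.equivFin L
  let τ : Ω → Ω := fun x => if g • x = h • x then g • x else x
  have hτ : ∀ x, τ x = if g • x = h • x then g • x else x := fun _ => rfl
  have key : ∀ x y : L, ∃ f : G, f • x.1 = τ x.1 ∧ f • y.1 = τ y.1 := by
    have cg : ∀ x : Ω, g • x = x → g • x = τ x ∧ (1 : G) • x = τ x := by
      intro x hx; rw [hτ, one_smul]; split_ifs <;> simp [hx]
    have ch : ∀ x : Ω, h • x = x → h • x = τ x ∧ (1 : G) • x = τ x := by
      intro x hx; rw [hτ, one_smul]; split_ifs with hd
      · exact ⟨hd.symm, (hd.trans hx).symm⟩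
      · exact ⟨hx, rfl⟩
    have cd : ∀ x : Ω, g • x = h • x → g • x = τ x ∧ h • x = τ x := by
      intro x hx; rw [hτ, if_pos hx]; exact ⟨rfl, hx.symm⟩
    rintro ⟨x, hx | hx | hx⟩ ⟨y, hy | hy | hy⟩
    · exact ⟨g, (cg x hx).1, (cg y hy).1⟩
    · exact ⟨1, (cg x hx).2, (ch y hy).2⟩
    · exact ⟨g, (cg x hx).1, (cd y hy).1⟩
    · exact ⟨1, (ch x hx).2, (cg y hy).2⟩
    · exact ⟨1, (ch x hx).2, (ch y hy).2⟩
    · exact ⟨h, (ch x hx).1, (cd y hy).2⟩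
    · exact ⟨g, (cd x hx).1, (cg y hy).1⟩
    · exact ⟨h, (cd x hx).2, (ch y hy).1⟩
    · exact ⟨g, (cd x hx).1, (cd y hy).1⟩
  obtain ⟨f, hf⟩ := hbin (Nat.card L) (fun i => (e.symm i).1) (fun i => τ (e.symm i).1)
    (fun i j => key _ _)
  have hf' : ∀ x : L, f • x.1 = τ x.1 := fun x => by simpa using hf (e x)
  refine ⟨f, fun x hx => ?_, fun x hx => ?_, fun x hx => ?_⟩
  · rw [hf' ⟨x, Or.inl hx⟩, hτ]; split_ifs <;> simp [hx]
  · rw [hf' ⟨x, Or.inr (Or.inl hx)⟩, hτ]; split_ifs with hd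
    · exact hd.trans hx
    · rfl
  · rw [hf' ⟨x, Or.inr (Or.inr hx)⟩, hτ, if_pos hx]

/-- Corollary: suppose `G` acts transitively on `Ω` with point stabilizer `H`, `p` is a
prime, and `K = ⟨g, h⟩` is an elementary abelian subgroup of order `p²`, with `g, h` of
order `p` of maximal fixity, `⟨g⟩`, `⟨h⟩` and `⟨gh⁻¹⟩` pairwise conjugate in `G`, and
`K ∩ H = ⟨g⟩`. Then the action of `G` on `Ω` is not binary. -/
theorem not_binary_of_elementary_abelian_meeting_stabilizer
    (G Ω : Type*) [Group G] [Finite G] [Fintype Ω] [MulAction G Ω]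
    [MulAction.IsPretransitive G Ω]
    (ω₀ : Ω) (H : Subgroup G) (hH : H = MulAction.stabilizer G ω₀)
    (p : ℕ) (hp : p.Prime)
    (K : Subgroup G) (g h : G)
    (hK : K = Subgroup.closure ({g, h} : Set G))
    (hcard : Nat.card K = p ^ 2)
    (htors : ∀ x ∈ K, x ^ p = 1)
    (habel : ∀ x ∈ K, ∀ y ∈ K, Commute x y)
    (hg : orderOf g = p) (hh : orderOf h = p)
    (hmaxg : ∀ x : G, orderOf x = p →
      Nat.card ↥(MulAction.fixedBy Ω x) ≤ Nat.card ↥(MulAction.fixedBy Ω g))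
    (hmaxh : ∀ x : G, orderOf x = p →
      Nat.card ↥(MulAction.fixedBy Ω x) ≤ Nat.card ↥(MulAction.fixedBy Ω h))
    (hconj₁ : SubgroupsConj (Subgroup.zpowers g) (Subgroup.zpowers h))
    (hconj₂ : SubgroupsConj (Subgroup.zpowers g) (Subgroup.zpowers (g * h⁻¹)))
    (hconj₃ : SubgroupsConj (Subgroup.zpowers h) (Subgroup.zpowers (g * h⁻¹)))
    (hKH : K ⊓ H = Subgroup.zpowers g) :
    ¬ IsBinary G Ω := by
  intro hbin
  have : Fact p.Prime := ⟨hp⟩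
  have hgK : g ∈ K := hK ▸ Subgroup.subset_closure (by simp)
  have hhK : h ∈ K := hK ▸ Subgroup.subset_closure (by simp)
  have hcomm : Commute g h := habel g hgK h hhK
  have hgω : g • ω₀ = ω₀ := by
    have hmem : g ∈ K ⊓ H := hKH ▸ Subgroup.mem_zpowers g
    have hgH := hmem.2
    rw [hH] at hgH
    exact hgH
  -- Otherwise `K = ⟨g⟩` would have order `p`.
  have hhω : h • ω₀ ≠ ω₀ := by
    intro hfix
    have hmem : h ∈ Subgroup.zpowers g := by
      rw [← hKH]
      exact ⟨hhK, by rw [hH]; exact hfix⟩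
    have hle : K ≤ Subgroup.zpowers g := by
      rw [hK, Subgroup.closure_le]
      rintro x (rfl | rfl)
      · exact Subgroup.mem_zpowers _
      · exact hmem
    have hc := Nat.card_le_card_of_injective _ (Subgroup.inclusion_injective hle)
    rw [hcard, Nat.card_zpowers, hg] at hc
    nlinarith [hp.two_le]
  obtain ⟨f, hfg, hfh, hfd⟩ := hbin.exists_smul_eq g h
  have hdiff : ∀ x : Ω, (g * h⁻¹) • x = x ↔ g • x = h • x := by
    intro x
    rw [hcomm.inv_right.eq, mul_smul, inv_smul_eq_iff]
  obtain ⟨α, hα, hgα⟩ : ∃ α : Ω, g • α = h • α ∧ g • α ≠ α := by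
    by_contra! hcon
    have hsub : MulAction.fixedBy Ω (g * h⁻¹) ⊆ MulAction.fixedBy Ω g :=
      fun x hx => hcon x ((hdiff x).1 hx)
    have heq : MulAction.fixedBy Ω (g * h⁻¹) = MulAction.fixedBy Ω g :=
      Set.eq_of_subset_of_ncard_le hsub (card_fixedBy_le_of_subgroupsConj hconj₂)
    have hω : ω₀ ∈ MulAction.fixedBy Ω (g * h⁻¹) := by rw [heq]; exact hgω
    exact hhω (((hdiff ω₀).1 hω).symm.trans hgω)
  -- The set where `g` and `h` agree is `g`-invariant, so powers of `f` and of `g` agree on it.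
  have hpow : ∀ n : ℕ, f ^ n • α = g ^ n • α := by
    intro n
    induction n with
    | zero => simp
    | succ n ih =>
      have hn : g • g ^ n • α = h • g ^ n • α := by
        rw [← mul_smul, ← mul_smul, ← (hcomm.pow_left n).eq, mul_smul (g ^ n) h, ← hα,
          ← mul_smul, ← pow_succ, ← pow_succ']
      rw [pow_succ', mul_smul, ih, hfd _ hn, pow_succ', mul_smul]
  have hdvd : p ∣ orderOf f := by
    by_contra hnd
    have hstab : g ^ orderOf f ∈ MulAction.stabilizer G α := by
      rw [MulAction.mem_stabilizer_iff, ← hpow, pow_orderOf_eq_one, one_smul]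
    have hcop : (orderOf g).Coprime (orderOf f) := by
      rw [hg]; exact (Nat.Prime.coprime_iff_not_dvd hp).2 hnd
    obtain ⟨m, hm⟩ := exists_pow_eq_self_of_coprime hcop.symm
    exact hgα (by simpa [hm] using pow_mem hstab m)
  have hf0 : orderOf f ≠ 0 := (orderOf_pos f).ne'
  have hord := orderOf_pow_orderOf_div hf0 hdvd
  set q := f ^ (orderOf f / p) with hq
  have hqfix : ∀ x : Ω, f • x = x → q • x = x := fun x hx =>
    pow_mem (show f ∈ MulAction.stabilizer G x from hx) _
  have heq : MulAction.fixedBy Ω h = MulAction.fixedBy Ω q :=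
    Set.eq_of_subset_of_ncard_le (fun x hx => hqfix x (hfh x hx)) (hmaxh q hord)
  have hω : ω₀ ∈ MulAction.fixedBy Ω h := by
    rw [heq]; exact hqfix ω₀ (hfg ω₀ hgω)
  exact hhω hω
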